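/- (One-dimensional Chaplygin-type Hamiltonization.) Let K, B : ℝ → ℝ be smooth with K(t) > 0, let V : ℝ × ℝ → ℝ be smooth, and set f(t) := −B(t)/K(t). Fix t₀ ∈ ℝ, τ₀ ∈ ℝ, 𝒩₀ > 0, and define u(t) := τ₀ + ∫_{t₀}^t 𝒩₀ exp(∫_{t₀}^s f(σ)dσ) ds. Then u is a strictly increasing smooth map from ℝ onto an open interval (τ₁,τ₂); let z := u^{-1} : (τ₁,τ₂) → ℝ and 𝒩(τ) := u'(z(τ)) = 1/z'(τ). For any twice differentiable y : ℝ → ℝ, y satisfies the equation K(t) ÿ + K̇(t) ẏ = −(∂V/∂y)(y(t),t) + B(t) ẏ for all t ∈ ℝ if and only if Y(τ) := y(z(τ)) satisfies the Euler–Lagrange equation (d/dτ)(K(z(τ)) 𝒩(τ)² Y'(τ)) = −(∂V/∂y)(Y(τ), z(τ)) for all τ ∈ (τ₁,τ₂). -/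

import Mathlib

open scoped ContDiff

/-!
In the old time, the transformed momentum `K 𝒩² Y'` is `K w ẏ`, where `w = u̇` solves
`ẇ = -(B / K) w`. Hence `(K w)˙ = w (K̇ - B)`: the multiplier `w` is an integrating factor, with
`(K w ẏ)˙ = w (K ÿ + K̇ ẏ - B ẏ)`. Dividing by `u̇ = w` turns the left-hand side into a
`τ`-derivative, so the Euler–Lagrange equation at `τ = u t` is the original equation at `t`.
-/

section Integral

variable {E : Type*} [NormedAddCommGroup E] [NormedSpace ℝ E] [CompleteSpace E]

lemma contDiff_integral_right {n : ℕ∞} {f : ℝ → E} (hf : ContDiff ℝ n f) (a : ℝ) :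
    ContDiff ℝ (n + 1) fun t => ∫ s in a..t, f s := by
  have hderiv (t : ℝ) : HasDerivAt (fun t => ∫ s in a..t, f s) (f t) t :=
    (hf.continuous.integral_hasStrictDerivAt a t).hasDerivAt
  refine contDiff_succ_iff_deriv.2 ⟨fun t => (hderiv t).differentiableAt, by simp, ?_⟩
  rwa [deriv_eq hderiv]

end Integral

/-- The Chaplygin multiplier as a function of the old time `t`: the solution of `ẇ = f w` with
`w t₀ = N₀`. The `𝒩` of the transformed system is this function composed with `z`. -/
noncomputable def chaplyginMultiplier (f : ℝ → ℝ) (t₀ N₀ t : ℝ) : ℝ :=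
  N₀ * Real.exp (∫ σ in t₀..t, f σ)

/-- The new time `τ = u t`: the antiderivative of the Chaplygin multiplier with `u t₀ = τ₀`. -/
noncomputable def chaplyginTime (f : ℝ → ℝ) (t₀ τ₀ N₀ t : ℝ) : ℝ :=
  τ₀ + ∫ s in t₀..t, chaplyginMultiplier f t₀ N₀ s

section Chaplygin

variable {f : ℝ → ℝ} {n : ℕ∞} {t₀ N₀ : ℝ}

lemma chaplyginMultiplier_pos (hN₀ : 0 < N₀) (t : ℝ) : 0 < chaplyginMultiplier f t₀ N₀ t :=
  mul_pos hN₀ (Real.exp_pos _)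

lemma hasDerivAt_chaplyginMultiplier (hf : Continuous f) (t₀ N₀ t : ℝ) :
    HasDerivAt (chaplyginMultiplier f t₀ N₀) (f t * chaplyginMultiplier f t₀ N₀ t) t :=
  ((hf.integral_hasStrictDerivAt t₀ t).hasDerivAt.exp.const_mul N₀).congr_deriv <| by
    rw [chaplyginMultiplier]; ring

lemma contDiff_chaplyginMultiplier (hf : ContDiff ℝ n f) (t₀ N₀ : ℝ) :
    ContDiff ℝ (n + 1) (chaplyginMultiplier f t₀ N₀) :=
  contDiff_const.mul (contDiff_integral_right hf t₀).exp

lemma hasStrictDerivAt_chaplyginTime (hf : Continuous f) (t₀ τ₀ N₀ t : ℝ) :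
    HasStrictDerivAt (chaplyginTime f t₀ τ₀ N₀) (chaplyginMultiplier f t₀ N₀ t) t :=
  have hw : Continuous (chaplyginMultiplier f t₀ N₀) :=
    continuous_iff_continuousAt.2 fun s => (hasDerivAt_chaplyginMultiplier hf t₀ N₀ s).continuousAt
  (hw.integral_hasStrictDerivAt t₀ t).const_add τ₀

lemma contDiff_chaplyginTime (hf : ContDiff ℝ n f) (t₀ τ₀ N₀ : ℝ) :
    ContDiff ℝ (n + 2) (chaplyginTime f t₀ τ₀ N₀) := by
  have hw : ContDiff ℝ (n + 1 : ℕ∞) (chaplyginMultiplier f t₀ N₀) :=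
    contDiff_chaplyginMultiplier hf t₀ N₀
  rw [← one_add_one_eq_two, ← add_assoc]
  exact contDiff_const.add (contDiff_integral_right hw t₀)

lemma strictMono_chaplyginTime (hf : Continuous f) (hN₀ : 0 < N₀) (t₀ τ₀ : ℝ) :
    StrictMono (chaplyginTime f t₀ τ₀ N₀) :=
  strictMono_of_deriv_pos fun t => by
    rw [(hasStrictDerivAt_chaplyginTime hf t₀ τ₀ N₀ t).hasDerivAt.deriv]
    exact chaplyginMultiplier_pos hN₀ t

end Chaplygin

section TimeChange

variable {𝕜 E : Type*} [NontriviallyNormedField 𝕜] [NormedAddCommGroup E] [NormedSpace 𝕜 E]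
  {K u w z N : 𝕜 → 𝕜} {y : 𝕜 → E} {t : 𝕜}

/-- The momentum `∂L*/∂Y'` of the transformed Lagrangian `½ K(z(τ)) (𝒩(τ) Y')² - V(Y, z(τ))` along
`Y = y ∘ z`, in the new time. Both `K` and `y` are functions of the old time. -/
noncomputable def transformedMomentum (K z N : 𝕜 → 𝕜) (y : 𝕜 → E) (τ : 𝕜) : E :=
  (K (z τ) * N τ ^ 2) • deriv (fun τ' => y (z τ')) τ

lemma hasDerivAt_mul_smul_of_integratingFactor {k b : 𝕜} {v : 𝕜 → E} {v' : E}
    (hK : HasDerivAt K k t) (hKt : K t ≠ 0) (hw : HasDerivAt w (-b / K t * w t) t)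
    (hv : HasDerivAt v v' t) :
    HasDerivAt (fun s => (K s * w s) • v s) (w t • (K t • v' + k • v t - b • v t)) t := by
  have hKw : HasDerivAt (fun s => K s * w s) (w t * (k - b)) t :=
    (hK.mul hw).congr_deriv (by field_simp; ring)
  exact (hKw.smul hv).congr_deriv (by module)

variable [CompleteSpace 𝕜]

lemma hasDerivAt_comp_leftInverse {u' : 𝕜} {y' : E} (hu : HasStrictDerivAt u u' t) (hu' : u' ≠ 0)
    (hz : Function.LeftInverse z u) (hy : HasDerivAt y y' t) :
    HasDerivAt (fun τ => y (z τ)) (u'⁻¹ • y') (u t) :=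
  hy.scomp_of_eq (u t) (hu.to_local_left_inverse hu' (.of_forall hz)).hasDerivAt (hz t).symm

lemma transformedMomentum_apply (hu : HasStrictDerivAt u (w t) t) (hw : w t ≠ 0)
    (hz : Function.LeftInverse z u) (hN : N (u t) = w t) (hy : DifferentiableAt 𝕜 y t) :
    transformedMomentum K z N y (u t) = (K t * w t) • deriv y t := by
  rw [transformedMomentum, (hasDerivAt_comp_leftInverse hu hw hz hy.hasDerivAt).deriv, hN, hz,
    smul_smul, sq, ← mul_assoc, mul_inv_cancel_right₀ hw]

lemma hasDerivAt_transformedMomentum {k b : 𝕜} {a : E} (hu : ∀ s, HasStrictDerivAt u (w s) s)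
    (hw : ∀ s, w s ≠ 0) (hz : Function.LeftInverse z u) (hN : ∀ s, N (u s) = w s)
    (hK : HasDerivAt K k t) (hKt : K t ≠ 0) (hwt : HasDerivAt w (-b / K t * w t) t)
    (hy : Differentiable 𝕜 y) (ha : HasDerivAt (deriv y) a t) :
    HasDerivAt (transformedMomentum K z N y)
      (K t • a + k • deriv y t - b • deriv y t) (u t) := by
  have hrange : Set.range u ∈ nhds (u t) :=
    (isOpenMap_of_hasStrictDerivAt hu hw).isOpen_range.mem_nhds ⟨t, rfl⟩
  have hmomentum : Set.EqOn (transformedMomentum K z N y)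
      (fun τ => (K (z τ) * w (z τ)) • deriv y (z τ)) (Set.range u) := by
    rintro _ ⟨s, rfl⟩
    simp only [transformedMomentum_apply (hu s) (hw s) hz (hN s) (hy s), hz s]
  have hderiv := hasDerivAt_comp_leftInverse (hu t) (hw t) hz
    (hasDerivAt_mul_smul_of_integratingFactor hK hKt hwt ha)
  rw [inv_smul_smul₀ (hw t)] at hderiv
  exact hderiv.congr_of_eventuallyEq (hmomentum.eventuallyEq_of_mem hrange)

end TimeChange

theorem one_dimensional_chaplygin_hamiltonization_general
    {E : Type*} [NormedAddCommGroup E] [NormedSpace ℝ E] {n : ℕ∞} {K B : ℝ → ℝ}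
    (hK : ContDiff ℝ n K) (hK' : Differentiable ℝ K) (hB : ContDiff ℝ n B) (hK₀ : ∀ t, K t ≠ 0)
    (Q : E → ℝ → E) {t₀ τ₀ N₀ : ℝ} (hN₀ : 0 < N₀) {u z N : ℝ → ℝ}
    (hu : ∀ t, u t = chaplyginTime (fun σ => -B σ / K σ) t₀ τ₀ N₀ t)
    (hz : Function.LeftInverse z u) (hN : ∀ τ, N τ = deriv u (z τ)) :
    ContDiff ℝ (n + 2) u ∧ StrictMono u ∧ IsOpen (Set.range u) ∧ (Set.range u).OrdConnected ∧
    ∀ y : ℝ → E, Differentiable ℝ y → Differentiable ℝ (deriv y) →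
      ((∀ t, K t • deriv (deriv y) t + deriv K t • deriv y t = Q (y t) t + B t • deriv y t) ↔
        ∀ τ ∈ Set.range u,
          deriv (transformedMomentum K z N y) τ = Q (y (z τ)) (z τ)) := by
  set f : ℝ → ℝ := fun σ => -B σ / K σ
  obtain rfl : u = chaplyginTime f t₀ τ₀ N₀ := funext hu
  have hf : ContDiff ℝ n f := hB.neg.div hK hK₀
  have hsmooth := contDiff_chaplyginTime hf t₀ τ₀ N₀
  have hderiv := hasStrictDerivAt_chaplyginTime hf.continuous t₀ τ₀ N₀
  have hw (t : ℝ) : chaplyginMultiplier f t₀ N₀ t ≠ 0 := (chaplyginMultiplier_pos hN₀ t).ne'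
  refine ⟨hsmooth, strictMono_chaplyginTime hf.continuous hN₀ t₀ τ₀,
    (isOpenMap_of_hasStrictDerivAt hderiv hw).isOpen_range,
    (isPreconnected_range hsmooth.continuous).ordConnected, fun y hy hy' => ?_⟩
  have hNw (s : ℝ) : N (chaplyginTime f t₀ τ₀ N₀ s) = chaplyginMultiplier f t₀ N₀ s := by
    rw [hN, hz, (hderiv s).hasDerivAt.deriv]
  have hmomentum (t : ℝ) := hasDerivAt_transformedMomentum hderiv hw hz hNw (hK' t).hasDerivAt
    (hK₀ t) (hasDerivAt_chaplyginMultiplier hf.continuous t₀ N₀ t) hy (hy' t).hasDerivAt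
  rw [Set.forall_mem_range]
  refine forall_congr' fun t => ?_
  rw [(hmomentum t).deriv, hz, sub_eq_iff_eq_add]

/-- One-dimensional Chaplygin-type Hamiltonization.  For the one-dimensional Lagrangian
system `L(y,ẏ,t) = ½K(t)ẏ² − V(y,t)` with non-potential force `F = B(t)ẏ dy`, the time
reparametrization `t = z(τ)` built from `u(t) = τ₀ + ∫_{t₀}^t 𝒩₀ exp(∫_{t₀}^s f(σ)dσ) ds`
(`f = −B/K`, `z = u⁻¹`, `𝒩(τ) = u'(z(τ))`) turns the equation of motion into the
Euler–Lagrange equation of `L*(y,y',τ) = ½K(z(τ))(𝒩(τ)y')² − V(y,z(τ))`.  Moreover `u`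
is a strictly increasing smooth map from `ℝ` onto an open interval. -/
theorem one_dimensional_chaplygin_hamiltonization
    (K B : ℝ → ℝ) (hK : ContDiff ℝ ∞ K) (hB : ContDiff ℝ ∞ B)
    (hKpos : ∀ t, 0 < K t)
    (V : ℝ → ℝ → ℝ) (hV : ContDiff ℝ ∞ (fun p : ℝ × ℝ => V p.1 p.2))
    (t₀ τ₀ N₀ : ℝ) (hN₀ : 0 < N₀)
    (u : ℝ → ℝ)
    (hu : ∀ t, u t = τ₀ + ∫ s in t₀..t, N₀ * Real.exp (∫ σ in t₀..s, -B σ / K σ))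
    (z : ℝ → ℝ) (hz : ∀ t, z (u t) = t)
    (N : ℝ → ℝ) (hN : ∀ τ, N τ = deriv u (z τ)) :
    -- `u` is smooth, strictly increasing, and its range is an open interval `(τ₁,τ₂)`
    ContDiff ℝ ∞ u ∧ StrictMono u ∧ IsOpen (Set.range u) ∧ (Set.range u).OrdConnected ∧
    -- the equivalence of the two equations of motion
    (∀ y : ℝ → ℝ, Differentiable ℝ y → Differentiable ℝ (deriv y) →
      ((∀ t, K t * deriv (deriv y) t + deriv K t * deriv y t
          = -(deriv (fun p => V p t) (y t)) + B t * deriv y t)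
        ↔
       (∀ τ ∈ Set.range u,
          deriv (fun σ => K (z σ) * (N σ) ^ 2 * deriv (fun σ' => y (z σ')) σ) τ
            = -(deriv (fun p => V p (z τ)) (y (z τ)))))) :=
  one_dimensional_chaplygin_hamiltonization_general hK (hK.differentiable (by simp)) hB
    (fun t => (hKpos t).ne') (fun x t => -(deriv (fun p => V p t) x)) hN₀ hu hz hN
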